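/- arXiv:1102.0748 — 2 statements merged into one kernel-verified Lean document; each statement's English description precedes it below -/
import Mathlib

section
/- For every n ≥ 1, n! = ∑_{π ∈ NC_even(2n)} ∏_{V ∈ π} b_{|V|/2}, where the sum is over all non-crossing partitions π of {1,…,2n} all of whose blocks have even size, and b_m denotes the number of connected parity-reversing pairings on [2m], with b_0 := 1. -/
open scoped Classical

/-- Asymmetric crossing of two chords: `B = {a,b}` with `a < b` starts strictly
before `C = {c,d}` and they interleave: `a < c < b < d`. -/
def CrossAsym (B C : Finset ℕ) : Prop :=
  ∃ a b c d : ℕ, a < c ∧ c < b ∧ b < d ∧ B = {a, b} ∧ C = {c, d}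

/-- Two blocks cross: `a < c < b < d` or `c < a < d < b`. -/
def Crosses (B C : Finset ℕ) : Prop := CrossAsym B C ∨ CrossAsym C B

/-- A pairing on `[2n] = {1, …, 2n}`: a partition of `{1, …, 2n}` into blocks of size 2. -/
def IsPairing (n : ℕ) (π : Finset (Finset ℕ)) : Prop :=
  (∀ B ∈ π, B.card = 2 ∧ B ⊆ Finset.Icc 1 (2 * n)) ∧
  (∀ x ∈ Finset.Icc 1 (2 * n), ∃! B, B ∈ π ∧ x ∈ B)

/-- Number of crossings of a pairing: the number of unordered pairs of blocks that cross
(each crossing unordered pair `{B, C}` satisfies the asymmetric condition exactly once). -/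
noncomputable def crNum (π : Finset (Finset ℕ)) : ℕ :=
  Set.ncard {p : Finset ℕ × Finset ℕ | p.1 ∈ π ∧ p.2 ∈ π ∧ CrossAsym p.1 p.2}

/-- A pairing is parity-reversing if each block consists of one odd and one even number. -/
def ParityReversing (π : Finset (Finset ℕ)) : Prop :=
  ∀ B ∈ π, ∃ a b : ℕ, B = {a, b} ∧ Odd a ∧ Even b

/-- A pairing is connected if its blocks cannot be split into two nonempty families
with no crossing between the families. -/
def ConnectedPairing (π : Finset (Finset ℕ)) : Prop :=
  ¬ ∃ S T : Finset (Finset ℕ), S ∪ T = π ∧ Disjoint S T ∧ S.Nonempty ∧ T.Nonempty ∧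
      ∀ B ∈ S, ∀ C ∈ T, ¬ Crosses B C

/-- `tCount n k`: the number of pairings on `[2n]` with exactly `k` crossings. -/
noncomputable def tCount (n k : ℕ) : ℕ :=
  Set.ncard {π : Finset (Finset ℕ) | IsPairing n π ∧ crNum π = k}

/-- `rCount n k`: the number of parity-reversing pairings on `[2n]` with exactly `k` crossings. -/
noncomputable def rCount (n k : ℕ) : ℕ :=
  Set.ncard {π : Finset (Finset ℕ) | IsPairing n π ∧ ParityReversing π ∧ crNum π = k}

/-- `bCount n k`: the number of connected parity-reversing pairings on `[2n]`
with exactly `k` crossings. -/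
noncomputable def bCount (n k : ℕ) : ℕ :=
  Set.ncard {π : Finset (Finset ℕ) |
    IsPairing n π ∧ ParityReversing π ∧ ConnectedPairing π ∧ crNum π = k}

/-- `bTot n`: the number of connected parity-reversing pairings on `[2n]` (equals 1 for `n = 0`). -/
noncomputable def bTot (n : ℕ) : ℕ :=
  Set.ncard {π : Finset (Finset ℕ) |
    IsPairing n π ∧ ParityReversing π ∧ ConnectedPairing π}

/-- The Touchard alternating sum `∑_{k=-n}^n (-1)^k q^{k(k-1)/2} C(2n, n+k)`. -/
noncomputable def touchardSum (n : ℕ) (q : ℂ) : ℂ :=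
  ∑ k ∈ Finset.Icc (-(n : ℤ)) (n : ℤ),
    (-1 : ℂ) ^ k * q ^ ((k * (k - 1)) / 2).toNat * ((2 * n).choose ((n : ℤ) + k).toNat : ℂ)

/-- `T_n(q) = ∑_k t_{n,k} q^k` as a complex polynomial function
(all crossing numbers of pairings on `[2n]` satisfy `k ≤ n*n`). -/
noncomputable def Tpoly (n : ℕ) (q : ℂ) : ℂ :=
  ∑ k ∈ Finset.range (n * n + 1), (tCount n k : ℂ) * q ^ k

/-- `T_n(q) = ∑_k t_{n,k} q^k` as a real polynomial function. -/
noncomputable def TpolyR (n : ℕ) (q : ℝ) : ℝ :=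
  ∑ k ∈ Finset.range (n * n + 1), (tCount n k : ℝ) * q ^ k

/-- `R_n(q) = ∑_k r_{n,k} q^k` as a real polynomial function. -/
noncomputable def RpolyR (n : ℕ) (q : ℝ) : ℝ :=
  ∑ k ∈ Finset.range (n * n + 1), (rCount n k : ℝ) * q ^ k

/-- Non-crossing partitions of `{1, …, 2n}` all of whose blocks have even size. -/
noncomputable def NCEvenPartitions (n : ℕ) : Finset (Finset (Finset ℕ)) :=
  ((Finset.Icc 1 (2 * n)).powerset.powerset).filter (fun π =>
    (∀ B ∈ π, B.Nonempty ∧ Even B.card) ∧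
    (∀ x ∈ Finset.Icc 1 (2 * n), ∃! B, B ∈ π ∧ x ∈ B) ∧
    ¬ ∃ a b c d : ℕ, a < b ∧ b < c ∧ c < d ∧
        ∃ B ∈ π, ∃ C ∈ π, B ≠ C ∧ a ∈ B ∧ c ∈ B ∧ b ∈ C ∧ d ∈ C)

/-!
Join two blocks of a pairing of a set `X` of numbers when they cross. The supports of the connected
components of this relation form a non-crossing partition of `X`: if the supports of two
non-crossing connected families interleaved as `a < b < c < d`, then, by connectedness of the first
family, no chord of the second could separate `a` from `c`, so, by connectedness of the second, all
its chords would lie on one side of the interval `(a, c)`, whereas `b` is inside and `d` outside.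
Conversely, connected pairings chosen on the blocks of a non-crossing partition glue to a pairing
with exactly these components, because chords in different blocks do not cross. So the pairings
with a given local property are counted by a sum over non-crossing partitions of products of
numbers of connected pairings, one for each block; blocks of odd size contribute `0`.

In a non-crossing partition of `[2n]` into blocks of even size, the gap between two elements of a
block is a union of whole blocks, hence of even size. Replacing each element of the block by its
rank in the block therefore preserves all parities or reverses all of them, so parity-reversing
connected pairings of a block `B` correspond to those of `{1, …, |B|}`. Finally, parity-reversing
pairings of `[2n]` are bijections from the odd to the even numbers, of which there are `n!`.
-/

open Finset

section Refinement

variable {α : Type*} [DecidableEq α] {s : Finset α} {P Q : Finpartition s} {B C : Finset α} {x : α}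

theorem subset_of_finpartition_le_of_mem (h : P ≤ Q) (hC : C ∈ P.parts) (hB : B ∈ Q.parts)
    (hxC : x ∈ C) (hxB : x ∈ B) : C ⊆ B := by
  obtain ⟨D, hD, hCD⟩ := h hC
  rwa [← Q.eq_of_mem_parts hD hB (hCD hxC) hxB]

theorem part_mem_filter_subset (h : P ≤ Q) (hB : B ∈ Q.parts) (hx : x ∈ B) :
    P.part x ∈ {C ∈ P.parts | C ⊆ B} :=
  have hxs := Q.le hB hx
  mem_filter.2 ⟨P.part_mem.2 hxs,
    subset_of_finpartition_le_of_mem h (P.part_mem.2 hxs) hB (P.mem_part hxs) hx⟩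

theorem finpartition_restrict_parts_of_le (h : P ≤ Q) (hB : B ∈ Q.parts) :
    (P.restrict (Q.le hB)).parts = {C ∈ P.parts | C ⊆ B} := by
  ext D
  simp only [Finpartition.restrict, mem_erase, mem_image, mem_filter, bot_eq_empty, inf_eq_inter]
  constructor
  · rintro ⟨hne, C, hC, rfl⟩
    obtain ⟨x, hx⟩ := nonempty_iff_ne_empty.2 hne
    have hCB := subset_of_finpartition_le_of_mem h hC hB (mem_inter.1 hx).1 (mem_inter.1 hx).2
    exact ⟨by rwa [inter_eq_left.2 hCB], inter_subset_right⟩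
  · rintro ⟨hD, hDB⟩
    exact ⟨P.ne_bot hD, D, hD, inter_eq_left.2 hDB⟩

theorem finpartition_bind_restrict_of_le (h : P ≤ Q) :
    Q.bind (fun _ hB => P.restrict (Q.le hB)) = P := by
  ext C
  simp only [Finpartition.mem_bind]
  constructor
  · rintro ⟨B, hB, hC⟩
    rw [finpartition_restrict_parts_of_le h hB] at hC
    exact (mem_filter.1 hC).1
  · intro hC
    obtain ⟨B, hB, hCB⟩ := h hC
    exact ⟨B, hB, by rw [finpartition_restrict_parts_of_le h hB]; exact mem_filter.2 ⟨hC, hCB⟩⟩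

theorem finpartition_bind_le (R : ∀ B ∈ Q.parts, Finpartition B) : Q.bind R ≤ Q := by
  intro C hC
  obtain ⟨B, hB, hC⟩ := Finpartition.mem_bind.1 hC
  exact ⟨B, hB, (R B hB).le hC⟩

theorem finpartition_restrict_bind (R : ∀ B ∈ Q.parts, Finpartition B) (hB : B ∈ Q.parts) :
    (Q.bind R).restrict (Q.le hB) = R B hB := by
  ext C
  rw [finpartition_restrict_parts_of_le (finpartition_bind_le R) hB, mem_filter,
    Finpartition.mem_bind]
  constructor
  · rintro ⟨⟨D, hD, hC⟩, hCB⟩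
    obtain ⟨x, hx⟩ := (R D hD).nonempty_of_mem_parts hC
    obtain rfl := Q.eq_of_mem_parts hD hB ((R D hD).le hC hx) (hCB hx)
    exact hC
  · exact fun hC => ⟨⟨B, hB, hC⟩, (R B hB).le hC⟩

theorem card_finpartition_le_eq_prod (Q : Finpartition s) (p : Finset (Finset α) → Prop)
    [DecidablePred p] :
    #{P : Finpartition s | P ≤ Q ∧ ∀ B ∈ Q.parts, p {C ∈ P.parts | C ⊆ B}} =
      ∏ B ∈ Q.parts, #{R : Finpartition B | p R.parts} := by
  rw [← card_pi]
  refine card_bij' (fun P _ B hB => P.restrict (Q.le hB)) (fun R _ => Q.bind R) ?_ ?_ ?_ ?_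
  · intro P hP
    obtain ⟨hPQ, hp⟩ := (mem_filter.1 hP).2
    refine mem_pi.2 fun B hB => mem_filter.2 ⟨mem_univ _, ?_⟩
    rw [finpartition_restrict_parts_of_le hPQ hB]
    exact hp B hB
  · intro R hR
    refine mem_filter.2 ⟨mem_univ _, finpartition_bind_le R, fun B hB => ?_⟩
    rw [← finpartition_restrict_parts_of_le (finpartition_bind_le R) hB,
      finpartition_restrict_bind R hB]
    exact (mem_filter.1 (mem_pi.1 hR B hB)).2
  · exact fun P hP => finpartition_bind_restrict_of_le (mem_filter.1 hP).2.1
  · exact fun R _ => funext₂ fun B hB => finpartition_restrict_bind R hB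

end Refinement

section Crossing

variable {σ τ : Finset (Finset ℕ)} {A B C D : Finset ℕ} {a b c d u v : ℕ}

theorem crosses_comm : Crosses C D ↔ Crosses D C := or_comm

theorem Crosses.exists_mem_lt_mem_lt (h : Crosses C D) :
    ∃ x ∈ C, ∃ y ∈ D, ∃ z ∈ C, x < y ∧ y < z := by
  obtain ⟨a, b, c, d, hac, hcb, -, rfl, rfl⟩ | ⟨a, b, c, d, -, hcb, hbd, rfl, rfl⟩ := h
  · exact ⟨a, by simp, c, by simp, b, by simp, hac, hcb⟩
  · exact ⟨c, by simp, b, by simp, d, by simp, hcb, hbd⟩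

theorem Crosses.not_disjoint_Ioo (h : Crosses C D) (hC : C ⊆ Ioo u v) :
    ¬ Disjoint D (Ioo u v) := by
  obtain ⟨x, hx, y, hy, z, hz, hxy, hyz⟩ := h.exists_mem_lt_mem_lt
  have hux := (mem_Ioo.1 (hC hx)).1
  have hzv := (mem_Ioo.1 (hC hz)).2
  exact not_disjoint_iff.2 ⟨y, hy, mem_Ioo.2 ⟨hux.trans hxy, hyz.trans hzv⟩⟩

theorem subset_Ioo_or_disjoint_of_not_crosses (hC : #C = 2) (hdisj : Disjoint {u, v} C)
    (hcross : ¬ Crosses {u, v} C) : C ⊆ Ioo u v ∨ Disjoint C (Ioo u v) := by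
  obtain ⟨c, d, hcd, hCeq⟩ : ∃ c d, c < d ∧ C = {c, d} := by
    obtain ⟨c, d, hne, rfl⟩ := card_eq_two.1 hC
    rcases hne.lt_or_gt with h | h
    exacts [⟨c, d, h, rfl⟩, ⟨d, c, h, pair_comm c d⟩]
  have hleft : ¬ (u < c ∧ c < v ∧ v < d) := fun h =>
    hcross (.inl ⟨u, v, c, d, h.1, h.2.1, h.2.2, rfl, hCeq⟩)
  have hright : ¬ (c < u ∧ u < d ∧ d < v) := fun h =>
    hcross (.inr ⟨c, d, u, v, h.1, h.2.1, h.2.2, hCeq, rfl⟩)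
  subst hCeq
  simp only [disjoint_insert_left, disjoint_insert_right, disjoint_singleton_left,
    disjoint_singleton_right, insert_subset_iff, singleton_subset_iff, mem_insert, mem_singleton,
    mem_Ioo] at hdisj ⊢
  omega

theorem connectedPairing_iff : ConnectedPairing σ ↔ ∀ p : Finset ℕ → Prop,
    (∀ B ∈ σ, ∀ C ∈ σ, Crosses B C → p B → p C) → ∀ B ∈ σ, p B → ∀ C ∈ σ, p C := by
  constructor
  · intro h p hp B hB hpB C hC
    by_contra hpC
    refine h ⟨{D ∈ σ | p D}, {D ∈ σ | ¬ p D}, filter_union_filter_not_eq p σ,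
      disjoint_filter_filter_not σ σ p, ⟨B, mem_filter.2 ⟨hB, hpB⟩⟩, ⟨C, mem_filter.2 ⟨hC, hpC⟩⟩,
      fun D hD E hE hDE => (mem_filter.1 hE).2 ?_⟩
    exact hp D (mem_filter.1 hD).1 E (mem_filter.1 hE).1 hDE (mem_filter.1 hD).2
  · rintro h ⟨S, T, rfl, hST, ⟨B, hB⟩, ⟨C, hC⟩, hcross⟩
    refine disjoint_left.1 hST (h (· ∈ S) (fun D _ E hE hDE hD => ?_) B (mem_union_left T hB) hB C
      (mem_union_right S hC)) hC
    exact (mem_union.1 hE).resolve_right fun hET => hcross D hD E hET hDE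

theorem ConnectedPairing.subset_Ioo (hσ : ConnectedPairing σ)
    (hsides : ∀ C ∈ σ, C ⊆ Ioo u v ∨ Disjoint C (Ioo u v)) (hB : B ∈ σ) (hBuv : B ⊆ Ioo u v)
    (hC : C ∈ σ) : C ⊆ Ioo u v :=
  connectedPairing_iff.1 hσ (· ⊆ Ioo u v)
    (fun _ _ E hE hDE hD => (hsides E hE).resolve_right (hDE.not_disjoint_Ioo hD)) B hB hBuv C hC

theorem ConnectedPairing.mem_Ioo_of_mem_Ioo (hσ : ConnectedPairing σ) (hpair : ∀ C ∈ σ, #C = 2)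
    (hdisj : ∀ C ∈ σ, Disjoint {u, v} C) (hcross : ∀ C ∈ σ, ¬ Crosses {u, v} C)
    (hA : A ∈ σ) (ha : a ∈ A) (hC : C ∈ σ) (hc : c ∈ C) (hauv : a ∈ Ioo u v) : c ∈ Ioo u v := by
  have hsides : ∀ D ∈ σ, D ⊆ Ioo u v ∨ Disjoint D (Ioo u v) := fun D hD =>
    subset_Ioo_or_disjoint_of_not_crosses (hpair D hD) (hdisj D hD) (hcross D hD)
  exact hσ.subset_Ioo hsides hA ((hsides A hA).resolve_right (not_disjoint_iff.2 ⟨a, ha, hauv⟩))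
    hC hc

theorem ConnectedPairing.not_interleave (hσ : ConnectedPairing σ) (hτ : ConnectedPairing τ)
    (hσpair : ∀ C ∈ σ, #C = 2) (hτpair : ∀ D ∈ τ, #D = 2)
    (hdisj : ∀ C ∈ σ, ∀ D ∈ τ, Disjoint C D) (hcross : ∀ C ∈ σ, ∀ D ∈ τ, ¬ Crosses C D)
    (hA : A ∈ σ) (ha : a ∈ A) (hB : B ∈ τ) (hb : b ∈ B) (hC : C ∈ σ) (hc : c ∈ C)
    (hD : D ∈ τ) (hd : d ∈ D) (hab : a < b) (hbc : b < c) (hcd : c < d) : False := by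
  have hmem : ∀ u v, {u, v} ∈ τ → (a ∈ Ioo u v ↔ c ∈ Ioo u v) := fun u v huv =>
    have hdisj' := fun E hE => (hdisj E hE _ huv).symm
    have hcross' := fun E hE h => hcross E hE _ huv (crosses_comm.1 h)
    ⟨hσ.mem_Ioo_of_mem_Ioo hσpair hdisj' hcross' hA ha hC hc,
      hσ.mem_Ioo_of_mem_Ioo hσpair hdisj' hcross' hC hc hA ha⟩
  have hsides : ∀ E ∈ τ, E ⊆ Ioo a c ∨ Disjoint E (Ioo a c) := by
    intro E hE
    obtain ⟨u, v, -, rfl⟩ := card_eq_two.1 (hτpair E hE)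
    have huv := hmem u v hE
    have hvu := hmem v u (pair_comm u v ▸ hE)
    have haE := disjoint_left.1 (hdisj A hA _ hE) ha
    have hcE := disjoint_left.1 (hdisj C hC _ hE) hc
    simp only [disjoint_insert_left, disjoint_singleton_left, insert_subset_iff,
      singleton_subset_iff, mem_insert, mem_singleton, mem_Ioo] at haE hcE huv hvu ⊢
    omega
  have hBac := (hsides B hB).resolve_right
    (not_disjoint_iff.2 ⟨b, hb, mem_Ioo.2 ⟨hab, hbc⟩⟩)
  exact (mem_Ioo.1 (hτ.subset_Ioo hsides hB hBac hD hd)).2.not_gt hcd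

end Crossing

/-- Noncrossing families of subsets of a linear order: two different members never interleave as
`a < b < c < d` with `a`, `c` in the one and `b`, `d` in the other. -/
def IsNoncrossing {α : Type*} [LinearOrder α] (π : Finset (Finset α)) : Prop :=
  ∀ B ∈ π, ∀ C ∈ π, ∀ a ∈ B, ∀ b ∈ C, ∀ c ∈ B, ∀ d ∈ C, a < b → b < c → c < d → B = C

/-- The equivalence relation generated by the crossings between members of `ρ`. -/
def crossingSetoid (ρ : Finset (Finset ℕ)) : Setoid (Finset ℕ) :=
  Relation.EqvGen.setoid fun C D => C ∈ ρ ∧ D ∈ ρ ∧ Crosses C D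

/-- The partition of the ground set `X` of `ρ` into the supports of the connected components of
`ρ` under crossing. -/
noncomputable def crossingComponents {X : Finset ℕ} (ρ : Finpartition X) : Finpartition X :=
  .ofSetSetoid ((crossingSetoid ρ.parts).comap ρ.part) X

section CrossingComponents

variable {X : Finset ℕ} {ρ π : Finpartition X} {B C D K : Finset ℕ}

theorem iff_of_crossingSetoid {σ : Finset (Finset ℕ)} {p : Finset ℕ → Prop}
    (hp : ∀ C ∈ σ, ∀ D ∈ σ, Crosses C D → p C → p D) (h : crossingSetoid σ C D) : p C ↔ p D := by
  have hle : crossingSetoid σ ≤ Setoid.ker p := Setoid.eqvGen_le fun E F ⟨hE, hF, hEF⟩ =>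
    propext ⟨hp E hE F hF hEF, hp F hF E hE (crosses_comm.1 hEF)⟩
  exact iff_of_eq (hle h)

theorem mem_crossingComponents_iff {x y : ℕ} (hB : B ∈ (crossingComponents ρ).parts) (hx : x ∈ B) :
    y ∈ B ↔ y ∈ X ∧ crossingSetoid ρ.parts (ρ.part x) (ρ.part y) := by
  rw [← (crossingComponents ρ).part_eq_of_mem hB hx, crossingComponents,
    Finpartition.mem_part_ofSetSetoid_iff_rel]
  exact and_iff_right ((crossingComponents ρ).le hB hx)

theorem le_crossingComponents : ρ ≤ crossingComponents ρ := by
  intro C hC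
  obtain ⟨x, hx⟩ := ρ.nonempty_of_mem_parts hC
  have hxX := ρ.le hC hx
  refine ⟨_, (crossingComponents ρ).part_mem.2 hxX, fun y hy => ?_⟩
  rw [mem_crossingComponents_iff ((crossingComponents ρ).part_mem.2 hxX)
    ((crossingComponents ρ).mem_part hxX), ρ.part_eq_of_mem hC hx, ρ.part_eq_of_mem hC hy]
  exact ⟨ρ.le hC hy, (crossingSetoid ρ.parts).refl' C⟩

theorem subset_crossingComponents_iff (hB : B ∈ (crossingComponents ρ).parts) (hC : C ∈ ρ.parts)
    (hCB : C ⊆ B) (hD : D ∈ ρ.parts) : D ⊆ B ↔ crossingSetoid ρ.parts C D := by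
  obtain ⟨x, hx⟩ := ρ.nonempty_of_mem_parts hC
  obtain ⟨y, hy⟩ := ρ.nonempty_of_mem_parts hD
  have hyB := mem_crossingComponents_iff hB (hCB hx) (y := y)
  rw [ρ.part_eq_of_mem hC hx, ρ.part_eq_of_mem hD hy, and_iff_right (ρ.le hD hy)] at hyB
  exact ⟨fun h => hyB.1 (h hy),
    fun h => subset_of_finpartition_le_of_mem le_crossingComponents hD hB hy (hyB.2 h)⟩

theorem Crosses.subset_crossingComponents (h : Crosses C D) (hC : C ∈ ρ.parts) (hD : D ∈ ρ.parts)
    (hB : B ∈ (crossingComponents ρ).parts) (hCB : C ⊆ B) : D ⊆ B :=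
  (subset_crossingComponents_iff hB hC hCB hD).2 (.rel _ _ ⟨hC, hD, h⟩)

theorem connectedPairing_crossingComponents (hB : B ∈ (crossingComponents ρ).parts) :
    ConnectedPairing {C ∈ ρ.parts | C ⊆ B} := by
  refine connectedPairing_iff.2 fun p hp C hC hpC D hD => ?_
  obtain ⟨hC, hCB⟩ := mem_filter.1 hC
  obtain ⟨hD, hDB⟩ := mem_filter.1 hD
  have hclosed : ∀ E ∈ ρ.parts, ∀ F ∈ ρ.parts, Crosses E F → E ⊆ B ∧ p E → F ⊆ B ∧ p F := by
    rintro E hE F hF hEF ⟨hEB, hpE⟩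
    have hFB := hEF.subset_crossingComponents hE hF hB hEB
    exact ⟨hFB, hp E (mem_filter.2 ⟨hE, hEB⟩) F (mem_filter.2 ⟨hF, hFB⟩) hEF hpE⟩
  have hlink := (subset_crossingComponents_iff hB hC hCB hD).1 hDB
  exact ((iff_of_crossingSetoid hclosed hlink).1 ⟨hCB, hpC⟩).2

theorem isNoncrossing_crossingComponents (hρ : ∀ C ∈ ρ.parts, #C = 2) :
    IsNoncrossing (crossingComponents ρ).parts := by
  intro B hB K hK a ha b hb c hc d hd hab hbc hcd
  by_contra hBK
  have hdisj : ∀ C ∈ {C ∈ ρ.parts | C ⊆ B}, ∀ D ∈ {D ∈ ρ.parts | D ⊆ K}, Disjoint C D :=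
    fun C hC D hD => ((crossingComponents ρ).disjoint hB hK hBK).mono (mem_filter.1 hC).2
      (mem_filter.1 hD).2
  have hcross : ∀ C ∈ {C ∈ ρ.parts | C ⊆ B}, ∀ D ∈ {D ∈ ρ.parts | D ⊆ K}, ¬ Crosses C D := by
    intro C hC D hD hCD
    obtain ⟨hC, hCB⟩ := mem_filter.1 hC
    obtain ⟨hD, hDK⟩ := mem_filter.1 hD
    obtain ⟨x, hx⟩ := ρ.nonempty_of_mem_parts hD
    exact hBK ((crossingComponents ρ).eq_of_mem_parts hB hK
      (hCD.subset_crossingComponents hC hD hB hCB hx) (hDK hx))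
  have hpart : ∀ L ∈ (crossingComponents ρ).parts, ∀ x ∈ L,
      ρ.part x ∈ {C ∈ ρ.parts | C ⊆ L} ∧ x ∈ ρ.part x := fun L hL x hx =>
    ⟨part_mem_filter_subset le_crossingComponents hL hx,
      ρ.mem_part ((crossingComponents ρ).le hL hx)⟩
  exact (connectedPairing_crossingComponents hB).not_interleave
    (connectedPairing_crossingComponents hK) (fun C hC => hρ C (mem_filter.1 hC).1)
    (fun D hD => hρ D (mem_filter.1 hD).1) hdisj hcross (hpart B hB a ha).1 (hpart B hB a ha).2
    (hpart K hK b hb).1 (hpart K hK b hb).2 (hpart B hB c hc).1 (hpart B hB c hc).2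
    (hpart K hK d hd).1 (hpart K hK d hd).2 hab hbc hcd

theorem IsNoncrossing.eq_of_crosses {σ : Finset (Finset ℕ)} (hσ : IsNoncrossing σ) (hB : B ∈ σ)
    (hK : K ∈ σ) (hCB : C ⊆ B) (hDK : D ⊆ K) (h : Crosses C D) : B = K := by
  obtain ⟨a, b, c, d, hac, hcb, hbd, rfl, rfl⟩ | ⟨a, b, c, d, hac, hcb, hbd, rfl, rfl⟩ := h
  · exact hσ B hB K hK a (hCB (by simp)) c (hDK (by simp)) b (hCB (by simp)) d (hDK (by simp))
      hac hcb hbd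
  · exact (hσ K hK B hB a (hDK (by simp)) c (hCB (by simp)) b (hDK (by simp)) d (hCB (by simp))
      hac hcb hbd).symm

theorem crossingComponents_le (hπ : IsNoncrossing π.parts) (h : ρ ≤ π) :
    crossingComponents ρ ≤ π := by
  intro K hK
  obtain ⟨x, hx⟩ := (crossingComponents ρ).nonempty_of_mem_parts hK
  obtain ⟨B, hB, hxB⟩ := h (ρ.part_mem.2 ((crossingComponents ρ).le hK hx))
  refine ⟨B, hB, fun y hy => ?_⟩
  obtain ⟨hyX, hxy⟩ := (mem_crossingComponents_iff hK hx).1 hy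
  refine (iff_of_crossingSetoid (p := (· ⊆ B)) (fun C _ D hD hCD hCB => ?_) hxy).1 hxB
    (ρ.mem_part hyX)
  obtain ⟨L, hL, hDL⟩ := h hD
  rwa [hπ.eq_of_crosses hB hL hCB hDL hCD]

theorem le_crossingComponents_of_connectedPairing (h : ρ ≤ π)
    (hconn : ∀ B ∈ π.parts, ConnectedPairing {C ∈ ρ.parts | C ⊆ B}) :
    π ≤ crossingComponents ρ := by
  intro B hB
  have hpart : ∀ y ∈ B, ρ.part y ∈ {C ∈ ρ.parts | C ⊆ B} := fun y hy =>
    part_mem_filter_subset h hB hy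
  obtain ⟨x, hx⟩ := π.nonempty_of_mem_parts hB
  obtain ⟨K, hK, hxK⟩ := le_crossingComponents (mem_filter.1 (hpart x hx)).1
  refine ⟨K, hK, fun y hy => connectedPairing_iff.1 (hconn B hB) (· ⊆ K) ?_ _ (hpart x hx) hxK _
    (hpart y hy) (ρ.mem_part (π.le hB hy))⟩
  exact fun C hC D hD hCD =>
    hCD.subset_crossingComponents (mem_filter.1 hC).1 (mem_filter.1 hD).1 hK

theorem crossingComponents_eq_iff (hπ : IsNoncrossing π.parts) : crossingComponents ρ = π ↔
    ρ ≤ π ∧ ∀ B ∈ π.parts, ConnectedPairing {C ∈ ρ.parts | C ⊆ B} := by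
  constructor
  · rintro rfl
    exact ⟨le_crossingComponents, fun B hB => connectedPairing_crossingComponents hB⟩
  · rintro ⟨h, hconn⟩
    exact (crossingComponents_le hπ h).antisymm (le_crossingComponents_of_connectedPairing h hconn)

end CrossingComponents

section Pairings

variable {α : Type*} [DecidableEq α]

/-- The pairings of a finite set `X` all of whose blocks satisfy `p`. -/
noncomputable def pairings (p : Finset α → Prop) (X : Finset α) : Finset (Finpartition X) :=
  {ρ | ∀ C ∈ ρ.parts, #C = 2 ∧ p C}

/-- The connected pairings of a finite set `X` of numbers all of whose blocks satisfy `p`. -/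
noncomputable def connectedPairings (p : Finset ℕ → Prop) (X : Finset ℕ) :
    Finset (Finpartition X) :=
  {ρ | (∀ C ∈ ρ.parts, #C = 2 ∧ p C) ∧ ConnectedPairing ρ.parts}

theorem mem_pairings {p : Finset α → Prop} {X : Finset α} {ρ : Finpartition X} :
    ρ ∈ pairings p X ↔ ∀ C ∈ ρ.parts, #C = 2 ∧ p C :=
  mem_filter_univ ρ

theorem mem_connectedPairings {p : Finset ℕ → Prop} {X : Finset ℕ} {ρ : Finpartition X} :
    ρ ∈ connectedPairings p X ↔ (∀ C ∈ ρ.parts, #C = 2 ∧ p C) ∧ ConnectedPairing ρ.parts :=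
  mem_filter_univ ρ

theorem even_card_of_mem_pairings {p : Finset α → Prop} {X : Finset α} {ρ : Finpartition X}
    (hρ : ρ ∈ pairings p X) : Even #X := by
  rw [← ρ.sum_card_parts, sum_congr rfl fun C hC => (mem_pairings.1 hρ C hC).1, sum_const,
    smul_eq_mul]
  exact even_two.mul_left _

theorem connectedPairings_eq_empty_of_not_even_card (p : Finset ℕ → Prop) {X : Finset ℕ}
    (hX : ¬ Even #X) : connectedPairings p X = ∅ :=
  eq_empty_of_forall_notMem fun _ hρ =>
    hX (even_card_of_mem_pairings (mem_pairings.2 (mem_connectedPairings.1 hρ).1))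

theorem mem_pairings_and_crossingComponents_eq_iff {p : Finset ℕ → Prop} {X : Finset ℕ}
    {ρ π : Finpartition X} (hπ : IsNoncrossing π.parts) :
    ρ ∈ pairings p X ∧ crossingComponents ρ = π ↔ ρ ≤ π ∧ ∀ B ∈ π.parts,
      (∀ C ∈ ρ.parts.filter (· ⊆ B), #C = 2 ∧ p C) ∧ ConnectedPairing {C ∈ ρ.parts | C ⊆ B} := by
  rw [mem_pairings, crossingComponents_eq_iff hπ]
  constructor
  · exact fun ⟨hp, hle, hconn⟩ =>
      ⟨hle, fun B hB => ⟨fun C hC => hp C (mem_filter.1 hC).1, hconn B hB⟩⟩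
  · refine fun ⟨hle, h⟩ => ⟨fun C hC => ?_, hle, fun B hB => (h B hB).2⟩
    obtain ⟨B, hB, hCB⟩ := hle hC
    exact (h B hB).1 C (mem_filter.2 ⟨hC, hCB⟩)

theorem card_pairings_eq_sum_isNoncrossing (p : Finset ℕ → Prop) (X : Finset ℕ) :
    #(pairings p X) = ∑ π : Finpartition X with IsNoncrossing π.parts,
      ∏ B ∈ π.parts, #(connectedPairings p B) := by
  have hmaps : ∀ ρ ∈ pairings p X, crossingComponents ρ ∈
      ({π | IsNoncrossing π.parts} : Finset (Finpartition X)) := fun ρ hρ =>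
    (mem_filter_univ _).2
      (isNoncrossing_crossingComponents fun C hC => (mem_pairings.1 hρ C hC).1)
  rw [card_eq_sum_card_fiberwise hmaps]
  refine sum_congr rfl fun π hπ => ?_
  simp only [connectedPairings]
  rw [← card_finpartition_le_eq_prod π fun σ => (∀ C ∈ σ, #C = 2 ∧ p C) ∧ ConnectedPairing σ]
  congr 1
  ext ρ
  rw [mem_filter, mem_filter_univ,
    mem_pairings_and_crossingComponents_eq_iff ((mem_filter_univ π).1 hπ)]

theorem card_pairings_eq_sum_isNoncrossing_even (p : Finset ℕ → Prop) (X : Finset ℕ) :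
    #(pairings p X) = ∑ π : Finpartition X with IsNoncrossing π.parts ∧ ∀ B ∈ π.parts, Even #B,
      ∏ B ∈ π.parts, #(connectedPairings p B) := by
  rw [card_pairings_eq_sum_isNoncrossing, ← filter_filter]
  refine (sum_filter_of_ne fun π _ hprod B hB => ?_).symm
  by_contra hodd
  have hempty := connectedPairings_eq_empty_of_not_even_card p hodd
  exact hprod (prod_eq_zero hB (card_eq_zero.2 hempty))

end Pairings

section Bichromatic

variable {α : Type*} {q : α → Prop} {a b c : α} {C : Finset α}

/-- A set is bichromatic for a two-colouring `q` if it contains elements of both colours. -/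
def Bichromatic (q : α → Prop) (C : Finset α) : Prop := (∃ a ∈ C, q a) ∧ ∃ b ∈ C, ¬ q b

theorem bichromatic_iff : Bichromatic q C ↔ ∃ a ∈ C, ∃ b ∈ C, ¬ (q a ↔ q b) := by
  constructor
  · rintro ⟨⟨a, ha, hqa⟩, b, hb, hqb⟩
    exact ⟨a, ha, b, hb, fun h => hqb (h.1 hqa)⟩
  · rintro ⟨a, ha, b, hb, h⟩
    by_cases hqa : q a
    · exact ⟨⟨a, ha, hqa⟩, b, hb, fun hqb => h (iff_of_true hqa hqb)⟩
    · exact ⟨⟨b, hb, by_contra fun hqb => h (iff_of_false hqa hqb)⟩, a, ha, hqa⟩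

theorem bichromatic_image_iff {β : Type*} [DecidableEq β] {r : β → Prop} {g : α → β}
    (h : ∀ a ∈ C, ∀ b ∈ C, (r (g a) ↔ r (g b)) ↔ (q a ↔ q b)) :
    Bichromatic r (C.image g) ↔ Bichromatic q C := by
  simp only [bichromatic_iff, exists_mem_image]
  exact exists_congr fun a => and_congr_right fun ha =>
    exists_congr fun b => and_congr_right fun hb => not_congr (h a ha b hb)

variable [DecidableEq α]

theorem eq_left_of_mem_pair (hqb : ¬ q b) (hc : c ∈ ({a, b} : Finset α)) (hqc : q c) : c = a :=
  (mem_insert.1 hc).resolve_right fun h => hqb (mem_singleton.1 h ▸ hqc)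

theorem card_eq_two_and_bichromatic_iff :
    #C = 2 ∧ Bichromatic q C ↔ ∃ a b, q a ∧ ¬ q b ∧ C = {a, b} := by
  constructor
  · rintro ⟨hC, ⟨a, ha, hqa⟩, b, hb, hqb⟩
    have hab : a ≠ b := by rintro rfl; exact hqb hqa
    refine ⟨a, b, hqa, hqb, (eq_of_subset_of_card_le ?_ (by rw [hC, card_pair hab])).symm⟩
    simp [insert_subset_iff, ha, hb]
  · rintro ⟨a, b, hqa, hqb, rfl⟩
    have hab : a ≠ b := by rintro rfl; exact hqb hqa
    exact ⟨card_pair hab, ⟨a, by simp, hqa⟩, b, by simp, hqb⟩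

variable {X : Finset α}

theorem exists_pair_mem_parts {ρ : Finpartition X} (hρ : ρ ∈ pairings (Bichromatic q) X)
    (ha : a ∈ X) (hqa : q a) : ∃ b, ¬ q b ∧ {a, b} ∈ ρ.parts := by
  have hpart := ρ.part_mem.2 ha
  obtain ⟨c, b, -, hqb, hcb⟩ := card_eq_two_and_bichromatic_iff.1 (mem_pairings.1 hρ _ hpart)
  obtain rfl := eq_left_of_mem_pair hqb (hcb ▸ ρ.mem_part ha) hqa
  exact ⟨b, hqb, hcb ▸ hpart⟩

variable [DecidablePred q]

theorem existsUnique_mem_pair (σ : {x ∈ X | q x} ≃ {x ∈ X | ¬ q x}) {x : α} (hx : x ∈ X) :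
    ∃! a, x ∈ ({a.1, (σ a).1} : Finset α) := by
  simp only [mem_insert, mem_singleton]
  by_cases hqx : q x
  · refine ⟨⟨x, mem_filter.2 ⟨hx, hqx⟩⟩, .inl rfl, fun a ha => ?_⟩
    exact Subtype.ext (ha.resolve_right fun h => (mem_filter.1 (σ a).2).2 (h ▸ hqx)).symm
  · refine ⟨σ.symm ⟨x, mem_filter.2 ⟨hx, hqx⟩⟩, .inr (by simp), fun a ha => ?_⟩
    rw [Equiv.eq_symm_apply]
    exact Subtype.ext (ha.resolve_left fun h => hqx (h ▸ (mem_filter.1 a.2).2)).symm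

/-- The pairing of `X` that matches each element `a` of one colour with its partner `σ a` of the
other colour. -/
def pairingOfEquiv (σ : {x ∈ X | q x} ≃ {x ∈ X | ¬ q x}) : Finpartition X :=
  .ofExistsUnique (univ.image fun a => {a.1, (σ a).1})
    (forall_mem_image.2 fun a _ => insert_subset (mem_filter.1 a.2).1
      (singleton_subset_iff.2 (mem_filter.1 (σ a).2).1))
    (fun x hx => by
      obtain ⟨a, ha, huniq⟩ := existsUnique_mem_pair σ hx
      refine ⟨_, ⟨mem_image_of_mem _ (mem_univ a), ha⟩, ?_⟩
      rintro _ ⟨hC, hxC⟩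
      obtain ⟨b, -, rfl⟩ := mem_image.1 hC
      rw [huniq b hxC])
    (by simp)

theorem mem_pairingOfEquiv_parts {σ : {x ∈ X | q x} ≃ {x ∈ X | ¬ q x}} :
    C ∈ (pairingOfEquiv σ).parts ↔ ∃ a, {a.1, (σ a).1} = C := by
  simp [pairingOfEquiv]

theorem pairingOfEquiv_mem_pairings (σ : {x ∈ X | q x} ≃ {x ∈ X | ¬ q x}) :
    pairingOfEquiv σ ∈ pairings (Bichromatic q) X := by
  refine mem_pairings.2 fun C hC => card_eq_two_and_bichromatic_iff.2 ?_
  obtain ⟨a, rfl⟩ := mem_pairingOfEquiv_parts.1 hC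
  exact ⟨a, σ a, (mem_filter.1 a.2).2, (mem_filter.1 (σ a).2).2, rfl⟩

theorem pairingOfEquiv_injective :
    Function.Injective (pairingOfEquiv : ({x ∈ X | q x} ≃ {x ∈ X | ¬ q x}) → _) := by
  intro σ τ h
  ext a
  obtain ⟨b, hb⟩ := mem_pairingOfEquiv_parts.1 (h ▸ mem_pairingOfEquiv_parts.2 ⟨a, rfl⟩)
  have hab : a = b := (existsUnique_mem_pair τ (mem_filter.1 a.2).1).unique
    (by simp) (by simp [hb])
  subst hab
  have hmem : (σ a).1 ∈ ({a.1, (τ a).1} : Finset α) := by simp [hb]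
  exact mem_singleton.1 ((mem_insert.1 hmem).resolve_left fun hσ =>
    (mem_filter.1 (σ a).2).2 (hσ ▸ (mem_filter.1 a.2).2))

theorem exists_pairingOfEquiv_eq (hX : #{x ∈ X | q x} = #{x ∈ X | ¬ q x}) {ρ : Finpartition X}
    (hρ : ρ ∈ pairings (Bichromatic q) X) :
    ∃ σ : {x ∈ X | q x} ≃ {x ∈ X | ¬ q x}, pairingOfEquiv σ = ρ := by
  have hpartner : ∀ a : {x ∈ X | q x}, ∃ b : {x ∈ X | ¬ q x}, {a.1, b.1} ∈ ρ.parts := fun a =>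
    have ⟨b, hqb, hab⟩ := exists_pair_mem_parts hρ (mem_filter.1 a.2).1 (mem_filter.1 a.2).2
    ⟨⟨b, mem_filter.2 ⟨ρ.le hab (by simp), hqb⟩⟩, hab⟩
  choose f hf using hpartner
  have hinj : Function.Injective f := by
    intro a b hab
    have hblocks := ρ.eq_of_mem_parts (hf a) (hf b) (a := (f a).1) (by simp) (by simp [hab])
    exact Subtype.ext (eq_left_of_mem_pair (mem_filter.1 (f b).2).2
      (hblocks ▸ mem_insert_self _ _) (mem_filter.1 a.2).2)
  have hbij := (Fintype.bijective_iff_injective_and_card f).2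
    ⟨hinj, by simpa only [Fintype.card_coe] using hX⟩
  refine ⟨.ofBijective f hbij, Finpartition.ext (Finset.ext fun C => ?_)⟩
  rw [mem_pairingOfEquiv_parts]
  constructor
  · rintro ⟨a, rfl⟩
    exact hf a
  · intro hC
    obtain ⟨-, ⟨a, ha, hqa⟩, -⟩ := mem_pairings.1 hρ C hC
    exact ⟨⟨a, mem_filter.2 ⟨ρ.le hC ha, hqa⟩⟩,
      ρ.eq_of_mem_parts (hf _) hC (mem_insert_self _ _) ha⟩

theorem card_pairings_bichromatic (hX : #{x ∈ X | q x} = #{x ∈ X | ¬ q x}) :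
    #(pairings (Bichromatic q) X) = (#{x ∈ X | q x}).factorial := by
  have himage : pairings (Bichromatic q) X =
      univ.map ⟨_, pairingOfEquiv_injective (X := X) (q := q)⟩ := by
    ext ρ
    simp only [mem_map, mem_univ, true_and, Function.Embedding.coeFn_mk]
    constructor
    · exact exists_pairingOfEquiv_eq hX
    · rintro ⟨σ, rfl⟩
      exact pairingOfEquiv_mem_pairings σ
  rw [himage, card_map, card_univ, Fintype.card_equiv (Fintype.equivOfCardEq
    (by simpa only [Fintype.card_coe] using hX)), Fintype.card_coe]

end Bichromatic

section Relabelling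

section Map

variable {α β : Type*} [DecidableEq α] [DecidableEq β] {g : α → β} {X : Finset α} {Y : Finset β}

/-- The partition of `Y` obtained by relabelling a partition of `X` along a bijection. -/
def mapBijOn (hg : Set.BijOn g X Y) (P : Finpartition X) : Finpartition Y :=
  .ofExistsUnique (P.parts.image (image g))
    (forall_mem_image.2 fun _ hC => image_subset_iff.2 fun _ hx => hg.mapsTo (P.le hC hx))
    (fun y hy => by
      obtain ⟨x, hx, rfl⟩ := hg.surjOn hy
      refine ⟨_, ⟨mem_image_of_mem _ (P.part_mem.2 hx), mem_image_of_mem g (P.mem_part hx)⟩, ?_⟩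
      rintro _ ⟨hC, hxC⟩
      obtain ⟨D, hD, rfl⟩ := mem_image.1 hC
      obtain ⟨z, hz, hzx⟩ := mem_image.1 hxC
      rw [P.part_eq_of_mem hD (hg.injOn (P.le hD hz) hx hzx ▸ hz)])
    (by simp)

theorem mapBijOn_parts (hg : Set.BijOn g X Y) (P : Finpartition X) :
    (mapBijOn hg P).parts = P.parts.image (image g) := rfl

theorem mapBijOn_injective (hg : Set.BijOn g X Y) : Function.Injective (mapBijOn hg) :=
  have hmem : ∀ P : Finpartition X, P.parts ∈ X.powerset.powerset := fun P =>
    mem_powerset.2 fun _ hC => mem_powerset.2 (P.le hC)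
  fun P Q h => Finpartition.ext <|
    image_injOn_powerset_of_injOn (image_injOn_powerset_of_injOn hg.injOn) (hmem P) (hmem Q)
      (congrArg Finpartition.parts h)

end Map

variable {g : ℕ → ℕ} {X Y C D : Finset ℕ} {σ : Finset (Finset ℕ)} {p r : Finset ℕ → Prop}

theorem CrossAsym.image (hg : StrictMonoOn g X) (hC : C ⊆ X) (hD : D ⊆ X) (h : CrossAsym C D) :
    CrossAsym (C.image g) (D.image g) := by
  obtain ⟨a, b, c, d, hac, hcb, hbd, rfl, rfl⟩ := h
  exact ⟨g a, g b, g c, g d, hg (hC (by simp)) (hD (by simp)) hac,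
    hg (hD (by simp)) (hC (by simp)) hcb, hg (hC (by simp)) (hD (by simp)) hbd,
    by simp [image_insert], by simp [image_insert]⟩

theorem Crosses.image (hg : StrictMonoOn g X) (hC : C ⊆ X) (hD : D ⊆ X) (h : Crosses C D) :
    Crosses (C.image g) (D.image g) :=
  h.imp (·.image hg hC hD) (·.image hg hD hC)

theorem ConnectedPairing.image (hg : StrictMonoOn g X) (hX : ∀ C ∈ σ, C ⊆ X)
    (hσ : ConnectedPairing σ) : ConnectedPairing (σ.image (image g)) := by
  simp only [connectedPairing_iff, forall_mem_image]
  intro p hp B hB hpB C hC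
  exact connectedPairing_iff.1 hσ (fun D => p (D.image g))
    (fun D hD E hE hDE => hp hD hE (hDE.image hg (hX D hD) (hX E hE))) B hB hpB C hC

theorem card_connectedPairings_le (hg : Set.BijOn g X Y) (hmono : StrictMonoOn g X)
    (hpr : ∀ C ⊆ X, p C → r (C.image g)) :
    #(connectedPairings p X) ≤ #(connectedPairings r Y) := by
  refine card_le_card_of_injOn (mapBijOn hg) (fun ρ hρ => ?_) (mapBijOn_injective hg).injOn
  obtain ⟨hblocks, hconn⟩ := mem_connectedPairings.1 hρ
  refine mem_connectedPairings.2 ⟨?_, hconn.image hmono fun C hC => ρ.le hC⟩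
  rw [mapBijOn_parts, forall_mem_image]
  exact fun C hC => ⟨by rw [card_image_of_injOn (hg.injOn.mono (ρ.le hC)), (hblocks C hC).1],
    hpr C (ρ.le hC) (hblocks C hC).2⟩

theorem card_connectedPairings_eq (hg : Set.BijOn g X Y) (hmono : StrictMonoOn g X)
    (hpr : ∀ C ⊆ X, p C ↔ r (C.image g)) :
    #(connectedPairings p X) = #(connectedPairings r Y) := by
  refine (card_connectedPairings_le hg hmono fun C hC => (hpr C hC).1).antisymm ?_
  have hinv := hg.invOn_invFunOn
  have hbij := hg.symm hinv.symm
  refine card_connectedPairings_le hbij (fun x hx y hy hxy => ?_) fun C hC hrC => ?_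
  · rwa [← hmono.lt_iff_lt (hbij.mapsTo hx) (hbij.mapsTo hy), hinv.2 hx, hinv.2 hy]
  · have hback : (C.image (Function.invFunOn g X)).image g = C := by
      rw [image_image]
      exact (image_congr fun x hx => hinv.2 (hC hx)).trans image_id
    rwa [hpr _ (image_subset_iff.2 fun x hx => hbij.mapsTo (hC hx)), hback]

end Relabelling

section Parity

section LinearOrder

variable {α : Type*} [LinearOrder α] {X B D : Finset α} {π : Finpartition X} {x y z w : α}

theorem IsNoncrossing.mem_Ioo_of_mem_Ioo (hπ : IsNoncrossing π.parts) (hB : B ∈ π.parts)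
    (hD : D ∈ π.parts) (hne : B ≠ D) (hx : x ∈ B) (hy : y ∈ B) (hz : z ∈ D)
    (hzxy : z ∈ Set.Ioo x y) (hw : w ∈ D) : w ∈ Set.Ioo x y := by
  have hdisj := disjoint_left.1 (π.disjoint hB hD hne)
  constructor
  · by_contra! hwx
    have hwx := hwx.lt_of_ne fun h => hdisj hx (h ▸ hw)
    exact hne (hπ D hD B hB w hw x hx z hz y hy hwx hzxy.1 hzxy.2).symm
  · by_contra! hyw
    have hyw := hyw.lt_of_ne fun h => hdisj hy (h ▸ hw)
    exact hne (hπ B hB D hD x hx z hz y hy w hw hzxy.1 hzxy.2 hyw)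

theorem IsNoncrossing.even_card_gap (hπ : IsNoncrossing π.parts)
    (heven : ∀ D ∈ π.parts, Even #D) (hB : B ∈ π.parts) (hx : x ∈ B) (hy : y ∈ B) :
    Even #{z ∈ X \ B | z ∈ Set.Ioo x y} := by
  have hgap : {z ∈ X \ B | z ∈ Set.Ioo x y} ⊆ X := (filter_subset _ _).trans sdiff_subset
  rw [← (π.restrict hgap).sum_card_parts, π.sum_restrict hgap card card_empty]
  refine even_sum _ fun D hD => ?_
  rw [inf_eq_inter]
  by_cases hgapD : ∃ z ∈ D, z ∈ ({z ∈ X \ B | z ∈ Set.Ioo x y} : Finset α)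
  · obtain ⟨z, hzD, hz⟩ := hgapD
    simp only [mem_filter, mem_sdiff] at hz
    have hne : B ≠ D := by rintro rfl; exact hz.1.2 hzD
    have hsub : D ⊆ {z ∈ X \ B | z ∈ Set.Ioo x y} := fun w hw =>
      mem_filter.2 ⟨mem_sdiff.2 ⟨π.le hD hw, disjoint_right.1 (π.disjoint hB hD hne) hw⟩,
        hπ.mem_Ioo_of_mem_Ioo hB hD hne hx hy hzD hz.2 hw⟩
    rw [inter_eq_left.2 hsub]
    exact heven D hD
  · rw [disjoint_iff_inter_eq_empty.1 (disjoint_left.2 fun z hzD hz => hgapD ⟨z, hzD, hz⟩)]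
    exact Even.zero

/-- The position of `x` in the increasing enumeration of `B`, starting from `1`. -/
def rankIn (B : Finset α) (x : α) : ℕ := #{z ∈ B | z ≤ x}

theorem strictMonoOn_rankIn (B : Finset α) : StrictMonoOn (rankIn B) B := fun _ _ y hy hxy =>
  card_lt_card (ssubset_iff_of_subset
    (monotone_filter_right _ fun _ _ h => h.trans hxy.le) |>.2
    ⟨y, mem_filter.2 ⟨hy, le_rfl⟩, fun h => (mem_filter.1 h).2.not_gt hxy⟩)

theorem bijOn_rankIn (B : Finset α) : Set.BijOn (rankIn B) B (Icc 1 #B) := by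
  have hmaps : Set.MapsTo (rankIn B) B (Icc 1 #B) := fun x hx => mem_coe.2 <| mem_Icc.2
    ⟨card_pos.2 ⟨x, mem_filter.2 ⟨hx, le_rfl⟩⟩, card_filter_le _ _⟩
  have hinj := (strictMonoOn_rankIn B).injOn
  exact ⟨hmaps, hinj, surjOn_of_injOn_of_card_le _ hmaps hinj (by simp)⟩

theorem rankIn_add_card (B : Finset α) (hxy : x ≤ y) :
    rankIn B x + #{z ∈ B | z ∈ Set.Ioc x y} = rankIn B y := by
  rw [rankIn, rankIn, ← card_union_of_disjoint (disjoint_filter.2 fun z _ h h' => h'.1.not_ge h),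
    ← filter_or]
  refine congrArg card (filter_congr fun z _ => ?_)
  exact ⟨fun h => h.elim (·.trans hxy) (·.2), fun h => (le_or_gt z x).imp_right (⟨·, h⟩)⟩

end LinearOrder

variable {u v x y : ℕ} {B : Finset ℕ} {π : Finpartition (Icc u v)}

theorem IsNoncrossing.even_add_rankIn_iff (hπ : IsNoncrossing π.parts)
    (heven : ∀ D ∈ π.parts, Even #D) (hB : B ∈ π.parts) (hx : x ∈ B) (hy : y ∈ B) :
    Even (x + rankIn B x) ↔ Even (y + rankIn B y) := by
  wlog hxy : x ≤ y generalizing x y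
  · exact (this hy hx (le_of_not_ge hxy)).symm
  have hxu := (mem_Icc.1 (π.le hB hx)).1
  have hyv := (mem_Icc.1 (π.le hB hy)).2
  have hgap : {z ∈ Icc u v \ B | z ∈ Set.Ioo x y} = {z ∈ Ioc x y | z ∉ B} := by
    ext z
    simp only [mem_filter, mem_sdiff, mem_Icc, Set.mem_Ioo, mem_Ioc]
    constructor
    · exact fun h => ⟨⟨h.2.1, h.2.2.le⟩, h.1.2⟩
    · rintro ⟨⟨hxz, hzy⟩, hz⟩
      have hzy := hzy.lt_of_ne (by rintro rfl; exact hz hy)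
      exact ⟨⟨⟨hxu.trans hxz.le, hzy.le.trans hyv⟩, hz⟩, hxz, hzy⟩
  have hgap_even := hgap ▸ hπ.even_card_gap heven hB hx hy
  have hrank := rankIn_add_card B hxy
  have hswap : {z ∈ B | z ∈ Set.Ioc x y} = {z ∈ Ioc x y | z ∈ B} := by
    ext z; simp only [mem_filter, Set.mem_Ioc, mem_Ioc, and_comm]
  have hcard : #{z ∈ Ioc x y | z ∈ B} + #{z ∈ Ioc x y | z ∉ B} = y - x := by
    rw [card_filter_add_card_filter_not, Nat.card_Ioc]
  rw [hswap] at hrank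
  obtain ⟨k, hk⟩ := hgap_even
  simp only [Nat.even_iff]
  omega

theorem card_connectedPairings_block (hπ : IsNoncrossing π.parts)
    (heven : ∀ D ∈ π.parts, Even #D) (hB : B ∈ π.parts) :
    #(connectedPairings (Bichromatic Odd) B) =
      #(connectedPairings (Bichromatic Odd) (Icc 1 #B)) := by
  refine card_connectedPairings_eq (bijOn_rankIn B) (strictMonoOn_rankIn B) fun C hC =>
    (bichromatic_image_iff fun x hx y hy => ?_).symm
  have h := hπ.even_add_rankIn_iff heven hB (hC hx) (hC hy)
  simp only [Nat.odd_iff, Nat.even_iff] at h ⊢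
  omega

end Parity

section Encoding

variable {α : Type*} [DecidableEq α]

theorem exists_finpartition_parts_eq_iff {X : Finset α} {σ : Finset (Finset α)} :
    (∃ P : Finpartition X, P.parts = σ) ↔
      (∀ C ∈ σ, C.Nonempty ∧ C ⊆ X) ∧ ∀ x ∈ X, ∃! C, C ∈ σ ∧ x ∈ C := by
  constructor
  · rintro ⟨P, rfl⟩
    exact ⟨fun C hC => ⟨P.nonempty_of_mem_parts hC, P.le hC⟩, fun x hx => P.existsUnique_mem hx⟩
  · rintro ⟨hσ, hX⟩
    exact ⟨.ofExistsUnique σ (fun C hC => (hσ C hC).2) hX fun h => not_nonempty_empty (hσ ∅ h).1,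
      rfl⟩

theorem finpartition_parts_injective (X : Finset α) :
    Function.Injective (Finpartition.parts : Finpartition X → _) :=
  fun _ _ => Finpartition.ext

theorem isPairing_iff {m : ℕ} {σ : Finset (Finset ℕ)} : IsPairing m σ ↔
    (∃ ρ : Finpartition (Icc 1 (2 * m)), ρ.parts = σ) ∧ ∀ C ∈ σ, #C = 2 := by
  rw [exists_finpartition_parts_eq_iff, IsPairing]
  constructor
  · exact fun ⟨hσ, hX⟩ =>
      ⟨⟨fun C hC => ⟨card_pos.1 (by simp [hσ C hC]), (hσ C hC).2⟩, hX⟩, fun C hC => (hσ C hC).1⟩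
  · exact fun ⟨⟨hσ, hX⟩, hcard⟩ => ⟨fun C hC => ⟨hcard C hC, (hσ C hC).2⟩, hX⟩

theorem parityReversing_iff {σ : Finset (Finset ℕ)} :
    ParityReversing σ ↔ ∀ C ∈ σ, #C = 2 ∧ Bichromatic Odd C := by
  simp only [card_eq_two_and_bichromatic_iff, Nat.not_odd_iff_even, ParityReversing]
  exact forall₂_congr fun C _ => exists₂_congr fun a b => by tauto

theorem bTot_eq_card_connectedPairings (m : ℕ) :
    bTot m = #(connectedPairings (Bichromatic Odd) (Icc 1 (2 * m))) := by
  rw [← card_image_of_injective _ (finpartition_parts_injective _), ← Set.ncard_coe_finset, bTot]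
  congr 1
  ext σ
  simp only [Set.mem_ofPred_eq, mem_coe, mem_image, mem_connectedPairings, isPairing_iff,
    parityReversing_iff]
  constructor
  · rintro ⟨⟨⟨ρ, rfl⟩, -⟩, hρ⟩
    exact ⟨ρ, hρ, rfl⟩
  · rintro ⟨ρ, ⟨hblocks, hconn⟩, rfl⟩
    exact ⟨⟨⟨ρ, rfl⟩, fun C hC => (hblocks C hC).1⟩, hblocks, hconn⟩

theorem ncEvenPartitions_eq_image (n : ℕ) : NCEvenPartitions n =
    ({π | IsNoncrossing π.parts ∧ ∀ B ∈ π.parts, Even #B} :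
      Finset (Finpartition (Icc 1 (2 * n)))).image Finpartition.parts := by
  ext σ
  simp only [NCEvenPartitions, mem_filter, mem_image, mem_univ, true_and, mem_powerset]
  have hncross : (¬ ∃ a b c d : ℕ, a < b ∧ b < c ∧ c < d ∧
      ∃ B ∈ σ, ∃ C ∈ σ, B ≠ C ∧ a ∈ B ∧ c ∈ B ∧ b ∈ C ∧ d ∈ C) ↔ IsNoncrossing σ := by
    constructor
    · intro h B hB C hC a ha b hb c hc d hd hab hbc hcd
      by_contra hne
      exact h ⟨a, b, c, d, hab, hbc, hcd, B, hB, C, hC, hne, ha, hc, hb, hd⟩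
    · rintro h ⟨a, b, c, d, hab, hbc, hcd, B, hB, C, hC, hne, ha, hc, hb, hd⟩
      exact hne (h B hB C hC a ha b hb c hc d hd hab hbc hcd)
  rw [hncross]
  constructor
  · rintro ⟨hX, hblocks, hcover, hσ⟩
    obtain ⟨π, rfl⟩ := exists_finpartition_parts_eq_iff.2
      ⟨fun C hC => ⟨(hblocks C hC).1, mem_powerset.1 (hX hC)⟩, hcover⟩
    exact ⟨π, ⟨hσ, fun B hB => (hblocks B hB).2⟩, rfl⟩
  · rintro ⟨π, ⟨hπ, heven⟩, rfl⟩
    have ⟨hblocks, hcover⟩ := exists_finpartition_parts_eq_iff.1 ⟨π, rfl⟩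
    exact ⟨fun C hC => mem_powerset.2 (hblocks C hC).2,
      fun B hB => ⟨(hblocks B hB).1, heven B hB⟩, hcover, hπ⟩

theorem card_filter_odd_Icc (n : ℕ) : #{x ∈ Icc 1 (2 * n) | Odd x} = n := by
  refine (card_bij' (t := range n) (fun x _ => x / 2) (fun k _ => 2 * k + 1) ?_ ?_ ?_ ?_).trans
    (card_range n) <;>
    simp only [mem_filter, mem_Icc, mem_range, Nat.odd_iff] <;> omega

theorem card_filter_not_odd_Icc (n : ℕ) : #{x ∈ Icc 1 (2 * n) | ¬ Odd x} = n := by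
  have h := card_filter_add_card_filter_not (s := Icc 1 (2 * n)) (fun x => Odd x)
  rw [card_filter_odd_Icc, Nat.card_Icc] at h
  omega

theorem card_pairings_odd_Icc (n : ℕ) :
    #(pairings (Bichromatic Odd) (Icc 1 (2 * n))) = n.factorial := by
  rw [card_pairings_bichromatic, card_filter_odd_Icc]
  rw [card_filter_odd_Icc, card_filter_not_odd_Icc]

theorem prod_card_connectedPairings_eq {n : ℕ} {π : Finpartition (Icc 1 (2 * n))}
    (hπ : IsNoncrossing π.parts) (heven : ∀ B ∈ π.parts, Even #B) :
    ∏ B ∈ π.parts, #(connectedPairings (Bichromatic Odd) B) =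
      ∏ B ∈ π.parts, bTot (#B / 2) :=
  prod_congr rfl fun B hB => by
    rw [card_connectedPairings_block hπ heven hB, bTot_eq_card_connectedPairings,
      Nat.two_mul_div_two_of_even (heven B hB)]

end Encoding

/-- Decomposition into connected components:
`n! = ∑_{π ∈ NC_even(2n)} ∏_{V ∈ π} b_{|V|/2}`. -/
theorem factorial_eq_sum_ncEven_prod_bTot (n : ℕ) (hn : 1 ≤ n) :
    Nat.factorial n = ∑ π ∈ NCEvenPartitions n, ∏ B ∈ π, bTot (B.card / 2) := by
  rw [← card_pairings_odd_Icc, card_pairings_eq_sum_isNoncrossing_even, ncEvenPartitions_eq_image,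
    sum_image (finpartition_parts_injective _).injOn]
  refine sum_congr rfl fun π hπ => ?_
  obtain ⟨hnoncrossing, heven⟩ := (mem_filter_univ π).1 hπ
  exact prod_card_connectedPairings_eq hnoncrossing heven
end

section
/- For every odd n ≥ 1, every parity-reversing pairing on [2n] has at most C(n,2) = n(n−1)/2 crossings, and there is exactly one parity-reversing pairing on [2n] with exactly C(n,2) crossings; in particular r_{n,C(n,2)} = 1 and r_{n,k} = 0 for all k > C(n,2). -/
open scoped Classical

/-! A pairing on `[2n]` has `n` blocks, so its number of crossings, the number of edges of a graph
on the blocks, is at most `C(n,2)`, with equality iff any two blocks cross. In that case each of the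
`n - 1` blocks other than `{a, b}` has exactly one point strictly between `a` and `b`, and every
such point lies in one of these blocks; hence `b = a + n`, and the pairing is `i ~ i + n`. It is
parity-reversing because `n` is odd. -/

open Finset

lemma pair_eq_pair_iff_of_lt {α : Type*} [DecidableEq α] [Preorder α] {a b c d : α}
    (hab : a < b) (hcd : c < d) : ({a, b} : Finset α) = {c, d} ↔ a = c ∧ b = d := by
  rw [← Finset.coe_inj, coe_pair, coe_pair, Set.pair_eq_pair_iff, or_iff_left]
  rintro ⟨rfl, rfl⟩
  exact hab.asymm hcd

lemma exists_lt_eq_pair_of_card_eq_two {α : Type*} [LinearOrder α] {s : Finset α}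
    (hs : #s = 2) : ∃ a b, a < b ∧ s = {a, b} := by
  obtain ⟨a, b, hne, rfl⟩ := card_eq_two.1 hs
  rcases hne.lt_or_gt with hab | hba
  · exact ⟨a, b, hab, rfl⟩
  · exact ⟨b, a, hba, pair_comm a b⟩

section Crossing

variable {a b c d : ℕ} {B C : Finset ℕ}

lemma crossAsym_pair_iff (hab : a < b) (hcd : c < d) :
    CrossAsym {a, b} {c, d} ↔ a < c ∧ c < b ∧ b < d := by
  constructor
  · rintro ⟨a', b', c', d', hac, hcb, hbd, hB, hC⟩
    obtain ⟨rfl, rfl⟩ := (pair_eq_pair_iff_of_lt hab (hac.trans hcb)).1 hB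
    obtain ⟨rfl, rfl⟩ := (pair_eq_pair_iff_of_lt hcd (hcb.trans hbd)).1 hC
    exact ⟨hac, hcb, hbd⟩
  · rintro ⟨hac, hcb, hbd⟩
    exact ⟨a, b, c, d, hac, hcb, hbd, rfl, rfl⟩

lemma CrossAsym.asymm (h : CrossAsym B C) : ¬ CrossAsym C B := by
  obtain ⟨a, b, c, d, hac, hcb, hbd, rfl, rfl⟩ := h
  rw [crossAsym_pair_iff (hcb.trans hbd) (hac.trans hcb)]
  exact fun h => hac.asymm h.1

lemma Crosses.symm (h : Crosses B C) : Crosses C B := Or.symm h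

lemma not_crosses_self (B : Finset ℕ) : ¬ Crosses B B := by
  rintro (h | h) <;> exact h.asymm h

lemma Crosses.card_Ioo_inter (hab : a < b) (h : Crosses {a, b} C) : #(Ioo a b ∩ C) = 1 := by
  rw [card_eq_one]
  rcases h with ⟨a', b', c, d, hac, hcb, hbd, hB, rfl⟩ | ⟨c, d, a', b', hca, had, hdb, rfl, hB⟩
  · obtain ⟨rfl, rfl⟩ := (pair_eq_pair_iff_of_lt hab (hac.trans hcb)).1 hB
    refine ⟨c, ?_⟩
    ext x
    simp only [mem_inter, mem_Ioo, mem_insert, mem_singleton]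
    omega
  · obtain ⟨rfl, rfl⟩ := (pair_eq_pair_iff_of_lt hab (had.trans hdb)).1 hB
    refine ⟨d, ?_⟩
    ext x
    simp only [mem_inter, mem_Ioo, mem_insert, mem_singleton]
    omega

end Crossing

section CrossingGraph

variable (π : Finset (Finset ℕ))

/-- The crossing graph of a family of blocks: its vertices are the blocks, and two of them are
adjacent when they cross. It turns bounds on `crNum` into bounds on a number of edges. -/
def crossingGraph : SimpleGraph π where
  Adj B C := Crosses B C
  symm := ⟨fun _ _ => Crosses.symm⟩
  loopless := ⟨fun B => not_crosses_self B⟩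

lemma crNum_eq_card_edgeFinset : crNum π = #(crossingGraph π).edgeFinset := by
  rw [crNum, ← Set.ncard_coe_finset, SimpleGraph.coe_edgeFinset]
  refine Set.ncard_congr (fun p hp => s(⟨p.1, hp.1⟩, ⟨p.2, hp.2.1⟩)) ?_ ?_ ?_
  · rintro ⟨B, C⟩ ⟨_, _, h⟩
    exact Or.inl h
  · rintro ⟨B, C⟩ ⟨B', C'⟩ ⟨_, _, h⟩ ⟨_, _, h'⟩ heq
    simp only [Sym2.eq_iff, Subtype.mk.injEq] at heq
    obtain ⟨rfl, rfl⟩ | ⟨rfl, rfl⟩ := heq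
    · rfl
    · exact absurd h' h.asymm
  · intro e
    induction e with
    | h B C =>
      rintro (h | h)
      · exact ⟨(B, C), ⟨B.2, C.2, h⟩, rfl⟩
      · exact ⟨(C, B), ⟨C.2, B.2, h⟩, Sym2.eq_swap⟩

lemma crNum_le_card_choose_two : crNum π ≤ (#π).choose 2 := by
  simpa only [crNum_eq_card_edgeFinset, Fintype.card_coe]
    using (crossingGraph π).card_edgeFinset_le_card_choose_two

lemma crossingGraph_eq_top_iff : crossingGraph π = ⊤ ↔ (π : Set (Finset ℕ)).Pairwise Crosses := by
  rw [SimpleGraph.eq_top_iff_forall_ne_adj]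
  exact pairwise_subtype_iff_pairwise_set _ Crosses

variable {π} in
lemma crNum_eq_card_choose_two_iff :
    crNum π = (#π).choose 2 ↔ (π : Set (Finset ℕ)).Pairwise Crosses := by
  rw [← crossingGraph_eq_top_iff, crNum_eq_card_edgeFinset, ← Fintype.card_coe π,
    ← SimpleGraph.card_edgeFinset_top_eq_card_choose_two, ← SimpleGraph.edgeFinset_inj]
  refine ⟨fun h => eq_of_subset_of_card_le ?_ h.ge, fun h => by rw [h]⟩
  exact SimpleGraph.edgeFinset_mono le_top

end CrossingGraph

namespace IsPairing

variable {n : ℕ} {π : Finset (Finset ℕ)}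

lemma sum_card_inter (h : IsPairing n π) {s : Finset ℕ} (hs : s ⊆ Icc 1 (2 * n)) :
    ∑ B ∈ π, #(s ∩ B) = #s := by
  rw [Finset.sum_card_inter (n := 1), mul_one]
  intro x hx
  simpa only [card_eq_one_iff_existsUnique, mem_filter] using h.2 x (hs hx)

lemma card_eq (h : IsPairing n π) : #π = n := by
  have hsum : ∑ B ∈ π, #(Icc 1 (2 * n) ∩ B) = #π * 2 := sum_const_nat fun B hB => by
    rw [inter_eq_right.2 (h.1 B hB).2, (h.1 B hB).1]
  rw [h.sum_card_inter subset_rfl, Nat.card_Icc] at hsum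
  omega

lemma crNum_le (h : IsPairing n π) : crNum π ≤ n.choose 2 := by
  simpa only [h.card_eq] using crNum_le_card_choose_two π

lemma crNum_eq_choose_two_iff_pairwise (h : IsPairing n π) :
    crNum π = n.choose 2 ↔ (π : Set (Finset ℕ)).Pairwise Crosses := by
  rw [← crNum_eq_card_choose_two_iff, h.card_eq]

lemma bounds_of_pair_mem (h : IsPairing n π) {a b : ℕ} (hB : {a, b} ∈ π) :
    (1 ≤ a ∧ a ≤ 2 * n) ∧ 1 ≤ b ∧ b ≤ 2 * n := by
  simpa only [insert_subset_iff, singleton_subset_iff, mem_Icc] using (h.1 _ hB).2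

lemma eq_add_of_pairwise_crosses (h : IsPairing n π)
    (hcross : (π : Set (Finset ℕ)).Pairwise Crosses) {a b : ℕ} (hab : a < b)
    (hB : {a, b} ∈ π) : b = a + n := by
  obtain ⟨⟨ha, -⟩, -, hb⟩ := h.bounds_of_pair_mem hB
  have hself : #(Ioo a b ∩ {a, b}) = 0 := by simp
  have hother : ∑ C ∈ π.erase {a, b}, #(Ioo a b ∩ C) = n - 1 := by
    rw [sum_const_nat (m := 1), card_erase_of_mem hB, h.card_eq, mul_one]
    intro C hC
    exact (hcross hB (mem_of_mem_erase hC) (ne_of_mem_erase hC).symm).card_Ioo_inter hab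
  have hcount : 0 + (n - 1) = b - a - 1 := by
    rw [← hself, ← hother, add_sum_erase π (fun C => #(Ioo a b ∩ C)) hB,
      h.sum_card_inter (Ioo_subset_Icc_self.trans (Icc_subset_Icc ha hb)), Nat.card_Ioo]
  omega

end IsPairing

section AntipodalPairing

variable {n : ℕ} {π : Finset (Finset ℕ)} {B : Finset ℕ}

/-- The pairing `i ~ i + n` of `[2n]`, whose chords are the diameters when `1, …, 2n` are placed in
order on a circle. It is the unique pairing with the maximal number of crossings. -/
def antipodalPairing (n : ℕ) : Finset (Finset ℕ) := (Icc 1 n).image fun i => {i, i + n}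

lemma mem_antipodalPairing :
    B ∈ antipodalPairing n ↔ ∃ i, (1 ≤ i ∧ i ≤ n) ∧ {i, i + n} = B := by
  simp only [antipodalPairing, mem_image, mem_Icc]

lemma isPairing_antipodalPairing (n : ℕ) : IsPairing n (antipodalPairing n) := by
  constructor
  · intro B hB
    obtain ⟨i, hi, rfl⟩ := mem_antipodalPairing.1 hB
    simp only [insert_subset_iff, singleton_subset_iff, mem_Icc]
    exact ⟨card_pair (by omega), by omega⟩
  · intro x hx
    rw [mem_Icc] at hx
    obtain ⟨i, hi, hxi⟩ : ∃ i, (1 ≤ i ∧ i ≤ n) ∧ (x = i ∨ x = i + n) := by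
      rcases le_or_gt x n with hxn | hxn
      · exact ⟨x, by omega⟩
      · exact ⟨x - n, by omega⟩
    refine ⟨{i, i + n}, ⟨mem_antipodalPairing.2 ⟨i, hi, rfl⟩, by simpa using hxi⟩, ?_⟩
    rintro C ⟨hC, hxC⟩
    obtain ⟨j, hj, rfl⟩ := mem_antipodalPairing.1 hC
    rw [mem_insert, mem_singleton] at hxC
    obtain rfl : j = i := by omega
    rfl

lemma parityReversing_antipodalPairing (hodd : Odd n) : ParityReversing (antipodalPairing n) := by
  intro B hB
  obtain ⟨i, -, rfl⟩ := mem_antipodalPairing.1 hB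
  rcases Nat.even_or_odd i with hi | hi
  · exact ⟨i + n, i, pair_comm _ _, hi.add_odd hodd, hi⟩
  · exact ⟨i, i + n, rfl, hi, hi.add_odd hodd⟩

lemma pairwise_crosses_antipodalPairing (n : ℕ) :
    (antipodalPairing n : Set (Finset ℕ)).Pairwise Crosses := by
  have hcross {i j : ℕ} (hij : i < j) (hi : 1 ≤ i) (hj : j ≤ n) :
      Crosses {i, i + n} {j, j + n} :=
    Or.inl ((crossAsym_pair_iff (by omega) (by omega)).2 (by omega))
  intro B hB C hC hne
  obtain ⟨i, hi, rfl⟩ := mem_antipodalPairing.1 hB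
  obtain ⟨j, hj, rfl⟩ := mem_antipodalPairing.1 hC
  rcases lt_trichotomy i j with hij | rfl | hji
  · exact hcross hij hi.1 hj.2
  · exact absurd rfl hne
  · exact (hcross hji hj.1 hi.2).symm

lemma IsPairing.eq_antipodalPairing (h : IsPairing n π)
    (hcross : (π : Set (Finset ℕ)).Pairwise Crosses) : π = antipodalPairing n := by
  refine eq_of_subset_of_card_le (fun B hB => ?_) ?_
  · obtain ⟨a, b, hab, rfl⟩ := exists_lt_eq_pair_of_card_eq_two (h.1 B hB).1
    obtain rfl := h.eq_add_of_pairwise_crosses hcross hab hB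
    have hbounds := h.bounds_of_pair_mem hB
    exact mem_antipodalPairing.2 ⟨a, by omega, rfl⟩
  · rw [h.card_eq, (isPairing_antipodalPairing n).card_eq]

theorem IsPairing.crNum_eq_choose_two_iff (h : IsPairing n π) :
    crNum π = n.choose 2 ↔ π = antipodalPairing n := by
  rw [h.crNum_eq_choose_two_iff_pairwise]
  refine ⟨h.eq_antipodalPairing, ?_⟩
  rintro rfl
  exact pairwise_crosses_antipodalPairing n

end AntipodalPairing

lemma rCount_eq_zero_of_choose_two_lt {n k : ℕ} (hk : n.choose 2 < k) : rCount n k = 0 := by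
  suffices h : {π | IsPairing n π ∧ ParityReversing π ∧ crNum π = k} = ∅ by
    rw [rCount, h, Set.ncard_empty]
  refine Set.eq_empty_of_forall_notMem ?_
  rintro π ⟨h, -, rfl⟩
  exact hk.not_ge h.crNum_le

lemma rCount_choose_two_of_odd {n : ℕ} (hodd : Odd n) : rCount n (n.choose 2) = 1 := by
  rw [rCount, Set.ncard_eq_one]
  refine ⟨antipodalPairing n, Set.eq_singleton_iff_unique_mem.2 ⟨?_, ?_⟩⟩
  · have h := isPairing_antipodalPairing n
    exact ⟨h, parityReversing_antipodalPairing hodd, h.crNum_eq_choose_two_iff.2 rfl⟩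
  · rintro π ⟨h, -, hmax⟩
    exact h.crNum_eq_choose_two_iff.1 hmax

/-- For odd `n`, every parity-reversing pairing on `[2n]` has at most `C(n,2)` crossings,
exactly one such pairing attains `C(n,2)` crossings, and `r_{n,k} = 0` for `k > C(n,2)`. -/
theorem rCount_max_crossings_odd (n : ℕ) (hn : 1 ≤ n) (hodd : Odd n) :
    (∀ π : Finset (Finset ℕ), IsPairing n π → ParityReversing π → crNum π ≤ n.choose 2) ∧
    rCount n (n.choose 2) = 1 ∧
    (∀ k : ℕ, n.choose 2 < k → rCount n k = 0) :=
  ⟨fun _ h _ => h.crNum_le, rCount_choose_two_of_odd hodd,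
    fun _ hk => rCount_eq_zero_of_choose_two_lt hk⟩
end
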